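/- arXiv:2107.01060 — 5 statements merged into one kernel-verified Lean document; each statement's English description precedes it below -/
import Mathlib

section
/- Let k ≥ 1 and d = 2^k. For s ∈ {x,y,z} let |0,s⟩, |1,s⟩ be the orthonormal eigenbasis of the Pauli matrix σ_s in ℂ², and for b ∈ {x,y,z}^k, p ∈ {0,1}^k set P^b_p = ⊗_{i=1}^k |p_i,b_i⟩⟨p_i,b_i| ∈ M(ℂ^d). For any real vector f = (f^{ab}_{qp}) indexed by a,b ∈ {x,y,z}^k and p,q ∈ {0,1}^k, the matrix Φ̂ = (1/(3^{2k} d)) ∑_{a,b,p,q} f^{ab}_{qp} (⊗_{i=1}^k (3|p_i,b_i⟩⟨p_i,b_i| − 𝟙₂)) ⊗ (⊗_{j=1}^k (3|q_j,a_j⟩⟨q_j,a_j| − 𝟙₂)) is the unique minimizer over all complex matrices τ ∈ M(ℂ^{d²}) of the least-squares functional τ ↦ ∑_{a,b,p,q} | d·Tr(τ (P^b_p ⊗ P^a_q)) − f^{ab}_{qp} |². -/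
noncomputable section
open Matrix Kronecker BigOperators
open scoped ComplexOrder

/-- The Frobenius (Hilbert–Schmidt) norm `‖A‖₂ = √Tr(AᴴA)` of a complex matrix. -/
def frobNorm {n : Type*} [Fintype n] (A : Matrix n n ℂ) : ℝ :=
  Real.sqrt (Matrix.trace (Aᴴ * A)).re

/-- The operator norm `‖A‖_∞` (largest singular value) of a complex matrix. -/
def opNorm {n : Type*} [Fintype n] [DecidableEq n] (A : Matrix n n ℂ) : ℝ :=
  ‖Matrix.toEuclideanCLM (𝕜 := ℂ) A‖

open scoped MatrixOrder in
/-- The trace norm `‖A‖₁ = Tr √(AᴴA)` of a complex matrix. -/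
def traceNorm {n : Type*} [Fintype n] [DecidableEq n] (A : Matrix n n ℂ) : ℝ :=
  (CFC.sqrt (Aᴴ * A)).trace.re

/-- A density matrix: positive semidefinite with trace one. -/
def IsDensity {n : Type*} [Fintype n] (ρ : Matrix n n ℂ) : Prop :=
  ρ.PosSemidef ∧ ρ.trace = 1

/-- A density matrix `ρ` is `δ`-almost rank `r` if there is a density matrix of rank at most `r`
within operator-norm distance `δ` of it. -/
def AlmostRank {n : Type*} [Fintype n] [DecidableEq n] (r : ℕ) (δ : ℝ) (ρ : Matrix n n ℂ) : Prop :=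
  ∃ σ : Matrix n n ℂ, IsDensity σ ∧ σ.rank ≤ r ∧ opNorm (ρ - σ) ≤ δ

/-- The rank-one (outer-product) matrix `|v⟩⟨v|`. -/
def outer {n : Type*} (v : EuclideanSpace ℂ n) : Matrix n n ℂ :=
  Matrix.of fun i j => v i * (starRingEnd ℂ) (v j)

/-- Partial trace over the first tensor factor. -/
def ptrace1 {d : ℕ} (X : Matrix (Fin d × Fin d) (Fin d × Fin d) ℂ) : Matrix (Fin d) (Fin d) ℂ :=
  Matrix.of fun j j' => ∑ i, X (i, j) (i, j')

/-- Partial trace over the second tensor factor. -/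
def ptrace2 {d : ℕ} (X : Matrix (Fin d × Fin d) (Fin d × Fin d) ℂ) : Matrix (Fin d) (Fin d) ℂ :=
  Matrix.of fun i i' => ∑ j, X (i, j) (i', j)

/-- A family of `m` rank-one projectors, each given by a unit vector. -/
def IsRankOneProjFamily {d m : ℕ} (P : Fin m → Matrix (Fin d) (Fin d) ℂ) : Prop :=
  ∀ l, ∃ v : EuclideanSpace ℂ (Fin d), ‖v‖ = 1 ∧ P l = outer v

/-- Near-isotropy: `∑ l, Tr(P l · A) • P l = A + Tr(A) • 𝟙` for every `A`. -/
def NearIsotropic {d m : ℕ} (P : Fin m → Matrix (Fin d) (Fin d) ℂ) : Prop :=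
  ∀ A : Matrix (Fin d) (Fin d) ℂ,
    ∑ l, Matrix.trace (P l * A) • P l = A + Matrix.trace A • (1 : Matrix (Fin d) (Fin d) ℂ)

/-- `ket s o` is the eigenvector `|o, s⟩` of the Pauli matrix `σ_s`, where
`s = 0, 1, 2` encodes `x, y, z`. -/
def ket : Fin 3 → Fin 2 → Fin 2 → ℂ
  | 0, 0 => ![(Real.sqrt 2 : ℂ)⁻¹, (Real.sqrt 2 : ℂ)⁻¹]
  | 0, 1 => ![(Real.sqrt 2 : ℂ)⁻¹, -(Real.sqrt 2 : ℂ)⁻¹]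
  | 1, 0 => ![(Real.sqrt 2 : ℂ)⁻¹, Complex.I * (Real.sqrt 2 : ℂ)⁻¹]
  | 1, 1 => ![(Real.sqrt 2 : ℂ)⁻¹, -(Complex.I * (Real.sqrt 2 : ℂ)⁻¹)]
  | 2, 0 => ![1, 0]
  | 2, 1 => ![0, 1]

/-- The rank-one projector `|o, s⟩⟨o, s|` onto a Pauli eigenvector. -/
def pauliProj (s : Fin 3) (o : Fin 2) : Matrix (Fin 2) (Fin 2) ℂ :=
  Matrix.of fun a b => ket s o a * (starRingEnd ℂ) (ket s o b)

/-- The single-qubit least-squares building block `3|o, s⟩⟨o, s| − 𝟙₂`. -/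
def pauliM (s : Fin 3) (o : Fin 2) : Matrix (Fin 2) (Fin 2) ℂ :=
  (3 : ℂ) • pauliProj s o - 1

/-- `k`-fold tensor product `⊗_{i=1}^k A i` of 2×2 matrices, realized as a matrix indexed by
`Fin k → Fin 2`. -/
def tensPow {k : ℕ} (A : Fin k → Matrix (Fin 2) (Fin 2) ℂ) :
    Matrix (Fin k → Fin 2) (Fin k → Fin 2) ℂ :=
  Matrix.of fun x y => ∏ i, A i (x i) (y i)

/-- The least-squares estimator
`Φ̂ = (1/(3^{2k} d)) ∑_{a,b,p,q} f^{ab}_{qp} (⊗_i (3|p_i,b_i⟩⟨p_i,b_i| − 𝟙₂)) ⊗ (⊗_j (3|q_j,a_j⟩⟨q_j,a_j| − 𝟙₂))`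
for direct QPT with single-qubit Pauli inputs and Pauli measurements. -/
def pauliLSEstimator (k : ℕ)
    (f : (Fin k → Fin 3) → (Fin k → Fin 3) → (Fin k → Fin 2) → (Fin k → Fin 2) → ℝ) :
    Matrix ((Fin k → Fin 2) × (Fin k → Fin 2)) ((Fin k → Fin 2) × (Fin k → Fin 2)) ℂ :=
  (1 / ((3 : ℂ) ^ (2 * k) * (2 : ℂ) ^ k)) •
    ∑ a : Fin k → Fin 3, ∑ b : Fin k → Fin 3, ∑ p : Fin k → Fin 2, ∑ q : Fin k → Fin 2,
      (f a b q p : ℂ) •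
        (tensPow (fun i => pauliM (b i) (p i)) ⊗ₖ tensPow (fun j => pauliM (a j) (q j)))

/-- The least-squares functional `τ ↦ ∑_{a,b,p,q} | d·Tr(τ (P^b_p ⊗ P^a_q)) − f^{ab}_{qp} |²`,
with `d = 2^k`. -/
def pauliLSFunctional (k : ℕ)
    (f : (Fin k → Fin 3) → (Fin k → Fin 3) → (Fin k → Fin 2) → (Fin k → Fin 2) → ℝ)
    (τ : Matrix ((Fin k → Fin 2) × (Fin k → Fin 2)) ((Fin k → Fin 2) × (Fin k → Fin 2)) ℂ) : ℝ :=
  ∑ a : Fin k → Fin 3, ∑ b : Fin k → Fin 3, ∑ p : Fin k → Fin 2, ∑ q : Fin k → Fin 2,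
    ‖(2 : ℂ) ^ k *
        Matrix.trace (τ *
          (tensPow (fun i => pauliProj (b i) (p i)) ⊗ₖ tensPow (fun j => pauliProj (a j) (q j))))
      - (f a b q p : ℂ)‖ ^ 2


section helpers

lemma lsq_abstract {J n : Type*} [Fintype J] [Fintype n] [DecidableEq n]
    (P M : J → Matrix n n ℂ) (c d : ℂ) (hc : c ≠ 0) (hd : d ≠ 0)
    (hP : ∀ j x y, (starRingEnd ℂ) (P j x y) = P j y x)
    (h1 : ∀ x y u v, ∑ j, P j y x * M j u v = c * ((if x = u then 1 else 0) * (if y = v then 1 else 0)))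
    (L : n → n → n → n → ℂ)
    (h3 : ∀ j x y, P j x y = ∑ u, ∑ v, L x y u v * M j u v)
    (f : J → ℂ) (t : Matrix n n ℂ) (ht : t = (1 / (c * d)) • ∑ j, f j • M j) :
    (∀ s : Matrix n n ℂ, ∑ j, ‖d * trace (t * P j) - f j‖ ^ 2 ≤ ∑ j, ‖d * trace (s * P j) - f j‖ ^ 2) ∧
    (∀ s : Matrix n n ℂ, ∑ j, ‖d * trace (s * P j) - f j‖ ^ 2 = ∑ j, ‖d * trace (t * P j) - f j‖ ^ 2 → s = t) := by
  have htr : ∀ (s : Matrix n n ℂ) j, trace (s * P j) = ∑ x, ∑ y, s x y * P j y x := by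
    intro s j
    simp [Matrix.trace, Matrix.mul_apply]
  have hrec : ∀ (s : Matrix n n ℂ) u v, ∑ j, trace (s * P j) * M j u v = c * s u v := by
    intro s u v
    simp_rw [htr, Finset.sum_mul]
    rw [Finset.sum_comm]
    simp_rw [Finset.sum_comm (s := (Finset.univ : Finset J))]
    simp_rw [mul_assoc, ← Finset.mul_sum, h1]
    rw [Finset.sum_eq_single u, Finset.sum_eq_single v]
    · simp; ring
    · intro b _ hb; simp [hb]
    · simp
    · intro b _ hb; simp [hb]
    · simp
  have hM : ∀ u v, ∑ j, (d * trace (t * P j) - f j) * M j u v = 0 := by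
    intro u v
    simp_rw [sub_mul, Finset.sum_sub_distrib, mul_assoc, ← Finset.mul_sum, hrec]
    rw [ht]
    simp only [Matrix.smul_apply, Matrix.sum_apply, smul_eq_mul]
    field_simp
    simp
  have hPz : ∀ x y, ∑ j, (d * trace (t * P j) - f j) * P j x y = 0 := by
    intro x y
    have : ∀ j, (d * trace (t * P j) - f j) * P j x y
        = ∑ u, ∑ v, L x y u v * ((d * trace (t * P j) - f j) * M j u v) := by
      intro j
      rw [h3 j x y, Finset.mul_sum]
      refine Finset.sum_congr rfl fun u _ => ?_
      rw [Finset.mul_sum]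
      refine Finset.sum_congr rfl fun v _ => ?_
      ring
    simp_rw [this]
    rw [Finset.sum_comm]
    simp_rw [Finset.sum_comm (s := (Finset.univ : Finset J)), ← Finset.mul_sum, hM]
    simp
  have horth : ∀ s : Matrix n n ℂ,
      ∑ j, (d * trace (t * P j) - f j) * (starRingEnd ℂ) (d * trace (s * P j)) = 0 := by
    intro s
    have : ∀ j, (d * trace (t * P j) - f j) * (starRingEnd ℂ) (d * trace (s * P j))
        = ∑ x, ∑ y, (starRingEnd ℂ d * starRingEnd ℂ (s x y)) *
          ((d * trace (t * P j) - f j) * P j x y) := by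
      intro j
      rw [htr s j, map_mul, map_sum, Finset.mul_sum, Finset.mul_sum]
      refine Finset.sum_congr rfl fun u _ => ?_
      rw [map_sum, Finset.mul_sum, Finset.mul_sum]
      refine Finset.sum_congr rfl fun v _ => ?_
      rw [map_mul, hP]
      ring
    simp_rw [this]
    rw [Finset.sum_comm]
    simp_rw [Finset.sum_comm (s := (Finset.univ : Finset J)), ← Finset.mul_sum, hPz]
    simp
  have hpyth : ∀ s : Matrix n n ℂ, ∑ j, ‖d * trace (s * P j) - f j‖ ^ 2
      = ∑ j, ‖d * trace (t * P j) - f j‖ ^ 2 + ∑ j, ‖d * trace ((s - t) * P j)‖ ^ 2 := by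
    intro s
    have h := congrArg Complex.re (horth (s - t))
    rw [Complex.re_sum, Complex.zero_re] at h
    have : ∀ j, ‖d * trace (s * P j) - f j‖ ^ 2 = ‖d * trace (t * P j) - f j‖ ^ 2
        + ‖d * trace ((s - t) * P j)‖ ^ 2
        + 2 * ((d * trace (t * P j) - f j) * (starRingEnd ℂ) (d * trace ((s - t) * P j))).re := by
      intro j
      have e : d * trace (s * P j) - f j
          = (d * trace (t * P j) - f j) + d * trace ((s - t) * P j) := by
        rw [Matrix.sub_mul, Matrix.trace_sub]; ring
      rw [e, ← Complex.normSq_eq_norm_sq, ← Complex.normSq_eq_norm_sq, ← Complex.normSq_eq_norm_sq,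
        Complex.normSq_add]
    simp_rw [this, Finset.sum_add_distrib, ← Finset.mul_sum, h]
    ring
  refine ⟨fun s => ?_, fun s hs => ?_⟩
  · rw [hpyth s]
    have : 0 ≤ ∑ j, ‖d * trace ((s - t) * P j)‖ ^ 2 := Finset.sum_nonneg fun j _ => by positivity
    linarith
  · rw [hpyth s] at hs
    have h0 : ∑ j, ‖d * trace ((s - t) * P j)‖ ^ 2 = 0 := by linarith
    rw [Finset.sum_eq_zero_iff_of_nonneg (fun j _ => by positivity)] at h0
    have h0' : ∀ j, trace ((s - t) * P j) = 0 := by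
      intro j
      have := h0 j (Finset.mem_univ j)
      simpa [hd] using this
    ext u v
    have := hrec (s - t) u v
    simp only [h0', zero_mul, Finset.sum_const_zero] at this
    have h2 : (s - t) u v = 0 := by
      rcases mul_eq_zero.mp this.symm with h | h
      · exact absurd h hc
      · exact h
    exact sub_eq_zero.mp (by simpa using h2)

lemma sqrt_two_inv_sq : ((Real.sqrt 2 : ℂ)⁻¹) * ((Real.sqrt 2 : ℂ)⁻¹) = 1 / 2 := by
  rw [← mul_inv, ← Complex.ofReal_mul, Real.mul_self_sqrt (by norm_num)]
  norm_num

lemma pauliProj_explicit : 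
    pauliProj 0 0 = !![1/2, 1/2; 1/2, 1/2] ∧ pauliProj 0 1 = !![1/2, -1/2; -1/2, 1/2] ∧
    pauliProj 1 0 = !![1/2, -Complex.I/2; Complex.I/2, 1/2] ∧
    pauliProj 1 1 = !![1/2, Complex.I/2; -Complex.I/2, 1/2] ∧
    pauliProj 2 0 = !![1, 0; 0, 0] ∧ pauliProj 2 1 = !![0, 0; 0, 1] := by
  have h := sqrt_two_inv_sq
  have hI := Complex.I_mul_I
  refine ⟨?_, ?_, ?_, ?_, ?_, ?_⟩ <;> ext i j <;> fin_cases i <;> fin_cases j <;>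
    simp [pauliProj, ket, -Complex.ofReal_inv] <;> grind

lemma single_h1 (x y u v : Fin 2) : ∑ b, ∑ p, pauliProj b p y x * pauliM b p u v =
    3 * ((if x = u then 1 else 0) * (if y = v then 1 else 0)) := by
  obtain ⟨h1, h2, h3, h4, h5, h6⟩ := pauliProj_explicit
  have hI := Complex.I_mul_I
  simp only [Fin.sum_univ_three, Fin.sum_univ_two, pauliM, h1, h2, h3, h4, h5, h6]
  fin_cases x <;> fin_cases y <;> fin_cases u <;> fin_cases v <;> simp <;> grind

def pauliL (x y u v : Fin 2) : ℂ :=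
  (1 / 3) * ((if x = u then 1 else 0) * (if y = v then 1 else 0)
    + (if x = y then 1 else 0) * (if u = v then 1 else 0))

lemma single_h3 (b : Fin 3) (p x y : Fin 2) :
    pauliProj b p x y = ∑ u, ∑ v, pauliL x y u v * pauliM b p u v := by
  obtain ⟨h1, h2, h3, h4, h5, h6⟩ := pauliProj_explicit
  have ht : pauliProj b p 0 0 + pauliProj b p 1 1 = 1 := by
    fin_cases b <;> fin_cases p <;> simp [h1, h2, h3, h4, h5, h6] <;> norm_num
  simp only [Fin.sum_univ_two, pauliM, pauliL]
  fin_cases x <;> fin_cases y <;> simp <;> grind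

lemma sum_sum_prod {k : ℕ} {α β : Type*} [Fintype α] [Fintype β]
    (g : Fin k → α → β → ℂ) :
    ∑ b : Fin k → α, ∑ p : Fin k → β, ∏ i, g i (b i) (p i) = ∏ i, ∑ s, ∑ o, g i s o := by
  classical
  simp_rw [Finset.prod_univ_sum, Fintype.piFinset_univ]

lemma tens_h1 {k : ℕ} (x y u v : Fin k → Fin 2) :
    ∑ b : Fin k → Fin 3, ∑ p : Fin k → Fin 2,
      tensPow (fun i => pauliProj (b i) (p i)) y x * tensPow (fun i => pauliM (b i) (p i)) u v =
    3 ^ k * ((if x = u then 1 else 0) * (if y = v then 1 else 0)) := by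
  simp only [tensPow, Matrix.of_apply, ← Finset.prod_mul_distrib]
  rw [sum_sum_prod (fun i s o => pauliProj s o (y i) (x i) * pauliM s o (u i) (v i))]
  simp_rw [single_h1, Finset.prod_mul_distrib, Finset.prod_ite_zero, funext_iff]
  simp

lemma tens_h3 {k : ℕ} (b : Fin k → Fin 3) (p x y : Fin k → Fin 2) :
    tensPow (fun i => pauliProj (b i) (p i)) x y = ∑ u : Fin k → Fin 2, ∑ v : Fin k → Fin 2,
      (∏ i, pauliL (x i) (y i) (u i) (v i)) * tensPow (fun i => pauliM (b i) (p i)) u v := by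
  simp only [tensPow, Matrix.of_apply, ← Finset.prod_mul_distrib]
  rw [sum_sum_prod (fun i s o => pauliL (x i) (y i) s o * pauliM (b i) (p i) s o)]
  simp_rw [← single_h3]

lemma tens_star {k : ℕ} (b : Fin k → Fin 3) (p x y : Fin k → Fin 2) :
    (starRingEnd ℂ) (tensPow (fun i => pauliProj (b i) (p i)) x y) =
      tensPow (fun i => pauliProj (b i) (p i)) y x := by
  simp [tensPow, pauliProj, mul_comm]

end helpers

/-- Proposition 1: the matrix `Φ̂` is the unique minimizer of the least-squares
functional for direct QPT with single-qubit Pauli inputs and Pauli measurements. -/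
theorem pauliLSEstimator_unique_minimizer (k : ℕ) (hk : 1 ≤ k)
    (f : (Fin k → Fin 3) → (Fin k → Fin 3) → (Fin k → Fin 2) → (Fin k → Fin 2) → ℝ) :
    (∀ τ, pauliLSFunctional k f (pauliLSEstimator k f) ≤ pauliLSFunctional k f τ) ∧
    (∀ τ, pauliLSFunctional k f τ = pauliLSFunctional k f (pauliLSEstimator k f) →
      τ = pauliLSEstimator k f) := by
  have key := lsq_abstract
    (J := (Fin k → Fin 3) × (Fin k → Fin 3) × (Fin k → Fin 2) × (Fin k → Fin 2))
    (fun j => tensPow (fun i => pauliProj (j.2.1 i) (j.2.2.1 i)) ⊗ₖ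
      tensPow (fun i => pauliProj (j.1 i) (j.2.2.2 i)))
    (fun j => tensPow (fun i => pauliM (j.2.1 i) (j.2.2.1 i)) ⊗ₖ
      tensPow (fun i => pauliM (j.1 i) (j.2.2.2 i)))
    ((3 : ℂ) ^ (2 * k)) ((2 : ℂ) ^ k) (by positivity) (by positivity)
    (by
      rintro j ⟨x1, x2⟩ ⟨y1, y2⟩
      simp [Matrix.kroneckerMap_apply, tens_star])
    (by
      rintro ⟨x1, x2⟩ ⟨y1, y2⟩ ⟨u1, u2⟩ ⟨v1, v2⟩
      have e := congrArg₂ (· * ·) (tens_h1 x2 y2 u2 v2) (tens_h1 x1 y1 u1 v1)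
      simp only [Fintype.sum_prod_type, Matrix.kroneckerMap_apply, Prod.mk.injEq]
      have e2 : (3 : ℂ) ^ (2 * k) * ((if x1 = u1 ∧ x2 = u2 then 1 else 0) *
          (if y1 = v1 ∧ y2 = v2 then 1 else 0)) =
          (3 ^ k * ((if x2 = u2 then 1 else 0) * (if y2 = v2 then 1 else 0))) *
          (3 ^ k * ((if x1 = u1 then 1 else 0) * (if y1 = v1 then 1 else 0))) := by
        simp only [two_mul, pow_add, ite_and]
        split_ifs <;> ring
      rw [e2, ← tens_h1 x2 y2 u2 v2, ← tens_h1 x1 y1 u1 v1, Finset.sum_mul_sum]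
      refine Finset.sum_congr rfl fun a _ => Finset.sum_congr rfl fun b _ => ?_
      rw [Finset.sum_mul_sum, Finset.sum_comm]
      refine Finset.sum_congr rfl fun q _ => Finset.sum_congr rfl fun p _ => ?_
      ring)
    (fun x y u v => (∏ i, pauliL (x.1 i) (y.1 i) (u.1 i) (v.1 i)) *
      (∏ i, pauliL (x.2 i) (y.2 i) (u.2 i) (v.2 i)))
    (by
      rintro ⟨a, b, p, q⟩ ⟨x1, x2⟩ ⟨y1, y2⟩
      simp only [Fintype.sum_prod_type, Matrix.kroneckerMap_apply]
      rw [tens_h3 b p, tens_h3 a q, Finset.sum_mul_sum]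
      refine Finset.sum_congr rfl fun u1 _ => Finset.sum_congr rfl fun u2 _ => ?_
      rw [Finset.sum_mul_sum]
      refine Finset.sum_congr rfl fun v1 _ => Finset.sum_congr rfl fun v2 _ => ?_
      ring)
    (fun j => (f j.1 j.2.1 j.2.2.2 j.2.2.1 : ℂ)) (pauliLSEstimator k f)
    (by simp only [pauliLSEstimator, Fintype.sum_prod_type])
  simp only [Fintype.sum_prod_type] at key
  exact key
end
end

section
/- Let d ≥ 2, m = d(d+1), and let {P_l}_{l=1}^m and {Q_k}_{k=1}^m be near-isotropic families of rank-one projectors in M(ℂ^d). Define the linear map T on M(ℂ^{d²}) by T(Z) = (d⁴/m²) ∑_{l,k} Tr(Z (P_l ⊗ Q_k)) P_l ⊗ Q_k. Then: (i) T(X ⊗ Y) = (d²/(d+1)²) X ⊗ Y whenever Tr(X) = Tr(Y) = 0; (ii) T(X ⊗ 𝟙_d) = (d²/(d+1)) X ⊗ 𝟙_d whenever Tr(X) = 0; (iii) T(𝟙_d ⊗ Y) = (d²/(d+1)) 𝟙_d ⊗ Y whenever Tr(Y) = 0; (iv) T(𝟙_d ⊗ 𝟙_d) = d² 𝟙_d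 ⊗ 𝟙_d. -/
noncomputable section
open Matrix Kronecker BigOperators
open scoped ComplexOrder

/-- The map `T = 𝒜†𝒜` of the MUB measurement map:
`T(Z) = (d⁴/m²) ∑_{l,k} Tr(Z (P_l ⊗ Q_k)) P_l ⊗ Q_k`, with `m = d(d+1)`. -/
def mubTmap (d : ℕ) (P Q : Fin (d * (d + 1)) → Matrix (Fin d) (Fin d) ℂ)
    (Z : Matrix (Fin d × Fin d) (Fin d × Fin d) ℂ) :
    Matrix (Fin d × Fin d) (Fin d × Fin d) ℂ :=
  ((d : ℂ) ^ 4 / ((d * (d + 1) : ℕ) : ℂ) ^ 2) •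
    ∑ l, ∑ k, Matrix.trace (Z * (P l ⊗ₖ Q k)) • (P l ⊗ₖ Q k)

/-- Action of `T` on a simple tensor. -/
theorem mubTmap_kron (d : ℕ)
    (P Q : Fin (d * (d + 1)) → Matrix (Fin d) (Fin d) ℂ)
    (hP : NearIsotropic P) (hQ : NearIsotropic Q) (X Y : Matrix (Fin d) (Fin d) ℂ) :
    mubTmap d P Q (X ⊗ₖ Y) = ((d : ℂ) ^ 4 / ((d * (d + 1) : ℕ) : ℂ) ^ 2) •
      ((X + Matrix.trace X • (1 : Matrix (Fin d) (Fin d) ℂ)) ⊗ₖ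
        (Y + Matrix.trace Y • (1 : Matrix (Fin d) (Fin d) ℂ))) := by
  unfold mubTmap
  rw [← hP X, ← hQ Y]
  congr 1
  ext ⟨i, j⟩ ⟨i', j'⟩
  simp only [Matrix.sum_apply, Matrix.smul_apply, Matrix.kroneckerMap_apply, smul_eq_mul,
    Finset.sum_mul_sum, ← Matrix.mul_kronecker_mul, Matrix.trace_kronecker]
  refine Finset.sum_congr rfl fun l _ => Finset.sum_congr rfl fun k _ => ?_
  rw [Matrix.trace_mul_comm X, Matrix.trace_mul_comm Y]
  ring

/-- eigenvalues and eigenspaces of the map `T = 𝒜†𝒜` for near-isotropic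
families of rank-one projectors:
(i) traceless ⊗ traceless vectors have eigenvalue `d²/(d+1)²`;
(ii), (iii) traceless ⊗ identity and identity ⊗ traceless have eigenvalue `d²/(d+1)`;
(iv) the identity has eigenvalue `d²`. -/
theorem mubTmap_eigenspaces (d : ℕ) (hd : 2 ≤ d)
    (P Q : Fin (d * (d + 1)) → Matrix (Fin d) (Fin d) ℂ)
    (hPproj : IsRankOneProjFamily P) (hQproj : IsRankOneProjFamily Q)
    (hPiso : NearIsotropic P) (hQiso : NearIsotropic Q) :
    (∀ X Y : Matrix (Fin d) (Fin d) ℂ, Matrix.trace X = 0 → Matrix.trace Y = 0 →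
      mubTmap d P Q (X ⊗ₖ Y) = ((d : ℂ) ^ 2 / ((d : ℂ) + 1) ^ 2) • (X ⊗ₖ Y)) ∧
    (∀ X : Matrix (Fin d) (Fin d) ℂ, Matrix.trace X = 0 →
      mubTmap d P Q (X ⊗ₖ (1 : Matrix (Fin d) (Fin d) ℂ)) =
        ((d : ℂ) ^ 2 / ((d : ℂ) + 1)) • (X ⊗ₖ (1 : Matrix (Fin d) (Fin d) ℂ))) ∧
    (∀ Y : Matrix (Fin d) (Fin d) ℂ, Matrix.trace Y = 0 →
      mubTmap d P Q ((1 : Matrix (Fin d) (Fin d) ℂ) ⊗ₖ Y) =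
        ((d : ℂ) ^ 2 / ((d : ℂ) + 1)) • ((1 : Matrix (Fin d) (Fin d) ℂ) ⊗ₖ Y)) ∧
    (mubTmap d P Q ((1 : Matrix (Fin d) (Fin d) ℂ) ⊗ₖ (1 : Matrix (Fin d) (Fin d) ℂ)) =
      ((d : ℂ) ^ 2) • ((1 : Matrix (Fin d) (Fin d) ℂ) ⊗ₖ (1 : Matrix (Fin d) (Fin d) ℂ))) := by
  have h0 : (d : ℂ) ≠ 0 := by
    have : d ≠ 0 := by omega
    exact_mod_cast this
  have h1 : (d : ℂ) + 1 ≠ 0 := by exact_mod_cast Nat.succ_ne_zero d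
  have h2 : (1 : Matrix (Fin d) (Fin d) ℂ) + (d : ℂ) • (1 : Matrix (Fin d) (Fin d) ℂ)
      = ((d : ℂ) + 1) • (1 : Matrix (Fin d) (Fin d) ℂ) := by
    rw [add_smul, one_smul, add_comm]
  refine ⟨fun X Y hX hY => ?_, fun X hX => ?_, fun Y hY => ?_, ?_⟩ <;>
    rw [mubTmap_kron d P Q hPiso hQiso]
  · rw [hX, hY, zero_smul, add_zero, add_zero]
    congr 1
    push_cast
    field_simp
  · rw [hX, zero_smul, add_zero, Matrix.trace_one, Fintype.card_fin, h2,
      Matrix.kronecker_smul, smul_smul]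
    congr 1
    push_cast
    field_simp
  · rw [hY, zero_smul, add_zero, Matrix.trace_one, Fintype.card_fin, h2,
      Matrix.smul_kronecker, smul_smul]
    congr 1
    push_cast
    field_simp
  · rw [Matrix.trace_one, Fintype.card_fin, h2,
      Matrix.smul_kronecker, Matrix.kronecker_smul, smul_smul, smul_smul]
    congr 1
    push_cast
    field_simp
end
end

section
/- Let Φ ∈ M(ℂ^n) be a density matrix and A ∈ M(ℂ^n) Hermitian with Tr(A) = 1. Let A = ∑_{i=1}^n λ_i |v_i⟩⟨v_i| be an eigendecomposition with orthonormal eigenvectors v_i. Let τ satisfy 0 ≤ τ ≤ ‖A − Φ‖_∞. For each i set ν_i = λ_i + τ if λ_i > τ and ν_i = 0 otherwise. Assume ∑_i ν_i ≥ 1 and let x₀ ≥ 0 satisfy ∑_i max(ν_i − x₀, 0) = 1. Then the density matrix B = ∑_i max(ν_i − x₀, 0) |v_i⟩⟨v_i| satisfies ‖B − Φ‖_∞ ≤ 2 ‖A − Φ‖_∞. -/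
noncomputable section
open Matrix Kronecker BigOperators
open scoped ComplexOrder

theorem toCLM_outer_apply {n : ℕ} (v x : EuclideanSpace ℂ (Fin n)) :
    Matrix.toEuclideanCLM (𝕜 := ℂ) (outer v) x = (inner ℂ v x) • v := by
  ext i
  simp only [Matrix.ofLp_toEuclideanCLM, Matrix.mulVec, dotProduct, outer, Matrix.of_apply,
    PiLp.smul_apply, smul_eq_mul, PiLp.inner_apply, RCLike.inner_apply, Finset.sum_mul]
  refine Finset.sum_congr rfl fun j _ => ?_
  ring

theorem toCLM_sum_apply {n : ℕ} (v : Fin n → EuclideanSpace ℂ (Fin n)) (c : Fin n → ℝ)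
    (x : EuclideanSpace ℂ (Fin n)) :
    Matrix.toEuclideanCLM (𝕜 := ℂ) (∑ i, (c i : ℂ) • outer (v i)) x
      = ∑ i, ((c i : ℂ) * inner ℂ (v i) x) • v i := by
  simp only [map_sum, map_smul, ContinuousLinearMap.sum_apply, ContinuousLinearMap.smul_apply,
    toCLM_outer_apply, smul_smul]

theorem inner_toCLM_sum {n : ℕ} (b : OrthonormalBasis (Fin n) ℂ (EuclideanSpace ℂ (Fin n)))
    (c : Fin n → ℝ) (x : EuclideanSpace ℂ (Fin n)) (i : Fin n) :
    inner ℂ (b i) (Matrix.toEuclideanCLM (𝕜 := ℂ) (∑ i, (c i : ℂ) • outer (b i)) x)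
      = (c i : ℂ) * inner ℂ (b i) x := by
  rw [toCLM_sum_apply]
  exact b.orthonormal.inner_right_fintype _ i

theorem opNorm_diag_le {n : ℕ} (b : OrthonormalBasis (Fin n) ℂ (EuclideanSpace ℂ (Fin n)))
    (c : Fin n → ℝ) (e : ℝ) (he : 0 ≤ e) (hc : ∀ i, |c i| ≤ e) :
    opNorm (∑ i, (c i : ℂ) • outer (b i)) ≤ e := by
  refine ContinuousLinearMap.opNorm_le_bound _ he fun x => ?_
  refine le_of_sq_le_sq ?_ (by positivity)
  rw [← b.sum_sq_norm_inner_right, mul_pow, ← b.sum_sq_norm_inner_right x, Finset.mul_sum]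
  refine Finset.sum_le_sum fun i _ => ?_
  rw [inner_toCLM_sum, norm_mul, mul_pow]
  gcongr
  simpa using hc i

theorem trace_eq_sum {n : ℕ} (b : OrthonormalBasis (Fin n) ℂ (EuclideanSpace ℂ (Fin n)))
    (M : Matrix (Fin n) (Fin n) ℂ) :
    M.trace = ∑ i, inner ℂ (b i) (Matrix.toEuclideanCLM (𝕜 := ℂ) M (b i)) := by
  have h := LinearMap.trace_eq_sum_inner (Matrix.toEuclideanLin M) b
  rw [Matrix.toEuclideanLin_eq_toLin_orthonormal, Matrix.trace_toLin_eq,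
    ← Matrix.toEuclideanLin_eq_toLin_orthonormal] at h
  exact h

theorem psd_inner_nonneg {n : ℕ} {M : Matrix (Fin n) (Fin n) ℂ} (hM : M.PosSemidef)
    (x : EuclideanSpace ℂ (Fin n)) :
    0 ≤ (inner ℂ x (Matrix.toEuclideanCLM (𝕜 := ℂ) M x)).re := by
  exact (Matrix.isPositive_toEuclideanLin_iff.2 hM).re_inner_nonneg_right x

/-- Lemma 2, main branch of Algorithm 1: operator-norm stability of the
thresholded projection onto trace-one positive semidefinite matrices.  If `A` is Hermitian of
trace one with eigendecomposition `A = ∑ λᵢ |vᵢ⟩⟨vᵢ|`, `0 ≤ τ ≤ ‖A − Φ‖_∞`, the thresholded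
eigenvalues `νᵢ = λᵢ + τ` (if `λᵢ > τ`, else `0`) satisfy `∑ νᵢ ≥ 1`, and `x₀ ≥ 0` is a
water-filling level with `∑ max(νᵢ − x₀, 0) = 1`, then the resulting density matrix
`B = ∑ max(νᵢ − x₀, 0) |vᵢ⟩⟨vᵢ|` satisfies `‖B − Φ‖_∞ ≤ 2‖A − Φ‖_∞`. -/
theorem thresholded_projection_opNorm_bound (n : ℕ)
    (Φ A : Matrix (Fin n) (Fin n) ℂ)
    (hΦ : IsDensity Φ) (hA : A.IsHermitian) (hAtr : A.trace = 1)
    (lam : Fin n → ℝ) (v : Fin n → EuclideanSpace ℂ (Fin n)) (hv : Orthonormal ℂ v)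
    (hAeig : A = ∑ i, (lam i : ℂ) • outer (v i))
    (τ : ℝ) (hτ0 : 0 ≤ τ) (hτ : τ ≤ opNorm (A - Φ))
    (ν : Fin n → ℝ) (hν : ∀ i, ν i = if τ < lam i then lam i + τ else 0)
    (hνsum : 1 ≤ ∑ i, ν i)
    (x₀ : ℝ) (hx₀ : 0 ≤ x₀) (hx₀sum : ∑ i, max (ν i - x₀) 0 = 1) :
    opNorm ((∑ i, (↑(max (ν i - x₀) 0) : ℂ) • outer (v i)) - Φ) ≤ 2 * opNorm (A - Φ) := by
  obtain ⟨b, hb⟩ : ∃ b : OrthonormalBasis (Fin n) ℂ (EuclideanSpace ℂ (Fin n)),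
      ∀ i, b i = v i := by
    have hv' : Orthonormal ℂ (Set.domRestrict Set.univ v) :=
      hv.comp _ Subtype.val_injective
    obtain ⟨b, hb⟩ := hv'.exists_orthonormalBasis_extension_of_card_eq (by simp)
    exact ⟨b, fun i => hb i (Set.mem_univ i)⟩
  obtain rfl : ⇑b = v := funext hb
  set e := opNorm (A - Φ) with he
  have he0 : 0 ≤ e := hτ0.trans hτ
  set p : Fin n → ℝ := fun i =>
    (inner ℂ (b i) (Matrix.toEuclideanCLM (𝕜 := ℂ) Φ (b i))).re with hp
  have hp0 : ∀ i, 0 ≤ p i := fun i => psd_inner_nonneg hΦ.1 _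
  have hp1 : ∑ i, p i = 1 := by
    have h := trace_eq_sum b Φ
    rw [hΦ.2] at h
    have h2 := congrArg Complex.re h
    rw [Complex.re_sum] at h2
    simpa [hp] using h2.symm
  have hlp : ∀ i, |lam i - p i| ≤ e := by
    intro i
    have h1 : (inner ℂ (b i) (Matrix.toEuclideanCLM (𝕜 := ℂ) (A - Φ) (b i))).re
        = lam i - p i := by
      rw [map_sub, ContinuousLinearMap.sub_apply, inner_sub_right, Complex.sub_re, hAeig,
        inner_toCLM_sum]
      simp [hp]
    rw [← h1]
    refine (Complex.abs_re_le_norm _).trans ((norm_inner_le_norm _ _).trans ?_)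
    have h2 := (Matrix.toEuclideanCLM (𝕜 := ℂ) (A - Φ)).le_opNorm (b i)
    simpa [he, opNorm] using h2
  have hx : x₀ ≤ τ + e := by
    by_contra! hlt
    have hle : ∀ i, max (ν i - x₀) 0 ≤ p i := by
      intro i
      have := abs_le.1 (hlp i)
      refine max_le ?_ (hp0 i)
      rw [hν i]
      split_ifs
      · linarith
      · linarith [hp0 i]
    have hpos : ∃ i, 0 < max (ν i - x₀) 0 := by
      by_contra! h
      have := Finset.sum_nonpos (s := Finset.univ) fun i _ => h i
      linarith
    obtain ⟨i, hi⟩ := hpos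
    have hlti : max (ν i - x₀) 0 < p i := by
      have h3 := abs_le.1 (hlp i)
      have h4 : 0 < ν i - x₀ := by simpa using hi
      rw [max_eq_left h4.le]
      have h5 := hν i
      split_ifs at h5
      · linarith
      · linarith
    have := Finset.sum_lt_sum (s := Finset.univ) (fun i _ => hle i) ⟨i, Finset.mem_univ i, hlti⟩
    linarith
  have hdiff : ∀ i, |max (ν i - x₀) 0 - lam i| ≤ e := by
    intro i
    have h3 := abs_le.1 (hlp i)
    have h0 := hp0 i
    have h5 := hν i
    rw [abs_le]
    split_ifs at h5 with h6
    · constructor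
      · linarith [le_max_left (ν i - x₀) 0]
      · have : max (ν i - x₀) 0 ≤ lam i + e := max_le (by linarith) (by linarith)
        linarith
    · rw [max_eq_right (by linarith)]
      constructor <;> linarith
  have hBA := opNorm_diag_le b (fun i => max (ν i - x₀) 0 - lam i) e he0 hdiff
  have hsplit : (∑ i, (↑(max (ν i - x₀) 0) : ℂ) • outer (b i)) - Φ
      = (∑ i, (((max (ν i - x₀) 0 - lam i : ℝ)) : ℂ) • outer (b i)) + (A - Φ) := by
    have : A = ∑ i, (lam i : ℂ) • outer (b i) := hAeig
    simp only [Complex.ofReal_sub, sub_smul, Finset.sum_sub_distrib]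
    rw [← this]
    abel
  rw [hsplit]
  calc _ ≤ opNorm (∑ i, (((max (ν i - x₀) 0 - lam i : ℝ)) : ℂ) • outer (b i)) + opNorm (A - Φ) := by
        unfold opNorm
        rw [map_add]
        exact norm_add_le _ _
    _ ≤ 2 * e := by linarith
end
end

section
/- Let (Ω, ℙ) be a probability space, n ≥ 1, r ≥ 1, K > 0, c > 0. Let Φ ∈ M(ℂ^n) be a density matrix of rank at most r, and let L, C, S : Ω → M(ℂ^n) be measurable matrix-valued maps such that: (a) for every τ ∈ [0,1], ℙ( ‖L − Φ‖_∞ ≥ τ ) ≤ K e^{−c τ²}; (b) for every ω, C(ω) is a density matrix, ‖C(ω) − Φ‖_∞ ≤ 2 ‖L(ω) − Φ‖_∞, and ‖S(ω) − Φ‖₂ ≤ ‖C(ω) − Φ‖₂. Then for every ε ∈ (0,1], ℙ( ‖S − Φ‖₂ ≥ ε ) ≤ K e^{−c ε² / (8r)}. -/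
noncomputable section
open Matrix Kronecker BigOperators
open scoped ComplexOrder

/-- Matrices inherit the (Borel) product measurable structure of `m → n → ℂ`. -/
instance matrixMeasurableSpace {m n : Type*} : MeasurableSpace (Matrix m n ℂ) :=
  inferInstanceAs (MeasurableSpace (m → n → ℂ))

lemma key_rank {n : ℕ} {Φ C : Matrix (Fin n) (Fin n) ℂ} (hC : C.PosSemidef)
    (hH : (C - Φ).IsHermitian) :
    (Finset.univ.filter (fun i => hH.eigenvalues i < 0)).card ≤ Φ.rank := by
  classical
  set U : Matrix (Fin n) (Fin n) ℂ := (hH.eigenvectorUnitary : Matrix (Fin n) (Fin n) ℂ) with hU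
  have hdiag : Uᴴ * (C - Φ) * U = Matrix.diagonal (fun i => (hH.eigenvalues i : ℂ)) := by
    have h1 : C - Φ = U * Matrix.diagonal (fun i => (hH.eigenvalues i : ℂ)) * Uᴴ := by
      have := hH.spectral_theorem
      simpa [Unitary.conjStarAlgAut_apply, Function.comp_def, Matrix.star_eq_conjTranspose] using this
    have h2 : Uᴴ * U = 1 := by
      have := Unitary.coe_star_mul_self hH.eigenvectorUnitary
      simpa [Matrix.star_eq_conjTranspose] using this
    calc Uᴴ * (C - Φ) * U
        = Uᴴ * (U * Matrix.diagonal (fun i => (hH.eigenvalues i : ℂ)) * Uᴴ) * U :=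
          congrArg (fun X => Uᴴ * X * U) h1
      _ = (Uᴴ * U) * Matrix.diagonal (fun i => (hH.eigenvalues i : ℂ)) * (Uᴴ * U) := by
          simp only [Matrix.mul_assoc]
      _ = _ := by rw [h2]; simp
  let V : Matrix (Fin n) {i // hH.eigenvalues i < 0} ℂ := U.submatrix id Subtype.val
  have hV : Vᴴ * (C - Φ) * V =
      Matrix.diagonal (fun i : {i // hH.eigenvalues i < 0} => (hH.eigenvalues i.1 : ℂ)) := by
    have : Vᴴ * (C - Φ) * V = (Uᴴ * (C - Φ) * U).submatrix Subtype.val Subtype.val := by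
      ext i j; simp [V, Matrix.mul_apply]
    rw [this, hdiag, Matrix.submatrix_diagonal _ _ Subtype.val_injective]
    rfl
  have hPD : (Vᴴ * Φ * V).PosDef := by
    have e : Vᴴ * Φ * V = Matrix.diagonal
        (fun i : {i // hH.eigenvalues i < 0} => ((-hH.eigenvalues i.1 : ℝ) : ℂ)) + Vᴴ * C * V := by
      have h3 : Matrix.diagonal
        (fun i : {i // hH.eigenvalues i < 0} => ((-hH.eigenvalues i.1 : ℝ) : ℂ)) =
          - (Vᴴ * (C - Φ) * V) := by
        rw [hV, Matrix.diagonal_neg]; congr 1; ext i; simp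
      rw [h3, Matrix.mul_sub, Matrix.sub_mul]; abel
    rw [e]
    refine Matrix.PosDef.add_posSemidef (Matrix.PosDef.diagonal ?_) (hC.conjTranspose_mul_mul_same V)
    intro i
    have := i.2
    exact_mod_cast (by linarith : (0:ℝ) < -hH.eigenvalues i.1)
  have hr := Matrix.rank_of_isUnit _ hPD.isUnit
  rw [← Fintype.card_subtype, ← hr]
  exact (Matrix.rank_mul_le_left _ _).trans (Matrix.rank_mul_le_right _ _)

lemma key_eig {n : ℕ} {A : Matrix (Fin n) (Fin n) ℂ} (hH : A.IsHermitian) (i : Fin n) :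
    |hH.eigenvalues i| ≤ opNorm A := by
  have h1 := (Matrix.toEuclideanCLM (𝕜 := ℂ) A).le_opNorm (hH.eigenvectorBasis i)
  have h2 : Matrix.toEuclideanCLM (𝕜 := ℂ) A (hH.eigenvectorBasis i) =
      (hH.eigenvalues i : ℂ) • hH.eigenvectorBasis i := by
    apply (WithLp.ofLp_injective 2)
    rw [Matrix.ofLp_toEuclideanCLM, hH.mulVec_eigenvectorBasis]
    ext j
    simp
  rw [h2, norm_smul] at h1
  simpa [opNorm] using h1

lemma key_frob {n : ℕ} {A : Matrix (Fin n) (Fin n) ℂ} (hH : A.IsHermitian) :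
    frobNorm A ^ 2 = ∑ i, hH.eigenvalues i ^ 2 := by
  have h : (Aᴴ * A).trace = ((∑ i, hH.eigenvalues i ^ 2 : ℝ) : ℂ) := by
    set U : Matrix (Fin n) (Fin n) ℂ := (hH.eigenvectorUnitary : Matrix (Fin n) (Fin n) ℂ) with hU
    set D : Matrix (Fin n) (Fin n) ℂ := Matrix.diagonal (fun i => (hH.eigenvalues i : ℂ)) with hD
    have h1 : A = U * D * Uᴴ := by
      have := hH.spectral_theorem
      simpa [Unitary.conjStarAlgAut_apply, Function.comp_def, Matrix.star_eq_conjTranspose] using this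
    have h2 : Uᴴ * U = 1 := by
      have := Unitary.coe_star_mul_self hH.eigenvectorUnitary
      simpa [Matrix.star_eq_conjTranspose] using this
    have h4 : A * A = U * (D * D * Uᴴ) := by
      calc A * A = (U * D * Uᴴ) * (U * D * Uᴴ) := by rw [← h1]
        _ = U * (D * (Uᴴ * U) * D * Uᴴ) := by simp only [Matrix.mul_assoc]
        _ = _ := by rw [h2, Matrix.mul_one]
    rw [hH.eq, h4, Matrix.trace_mul_comm, Matrix.mul_assoc, h2, Matrix.mul_one, hD,
      Matrix.diagonal_mul_diagonal, Matrix.trace_diagonal]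
    push_cast
    exact Finset.sum_congr rfl fun i _ => by ring
  rw [frobNorm, h, Complex.ofReal_re, Real.sq_sqrt (Finset.sum_nonneg fun i _ => sq_nonneg _)]

lemma key_bound {n r : ℕ} {Φ C : Matrix (Fin n) (Fin n) ℂ} (hΦ : IsDensity Φ)
    (hΦr : Φ.rank ≤ r) (hC : IsDensity C) :
    frobNorm (C - Φ) ^ 2 ≤ 2 * r * opNorm (C - Φ) ^ 2 := by
  have hH : (C - Φ).IsHermitian := hC.1.1.sub hΦ.1.1
  have hcard := (key_rank hC.1 hH).trans hΦr
  have hM : 0 ≤ opNorm (C - Φ) := norm_nonneg _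
  have htr : ∑ i, hH.eigenvalues i = 0 := by
    have := hH.trace_eq_sum_eigenvalues
    rw [Matrix.trace_sub, hC.2, hΦ.2, sub_self] at this
    have h : ((∑ i, hH.eigenvalues i : ℝ) : ℂ) = 0 := by
      push_cast; exact this.symm
    exact_mod_cast h
  rw [key_frob hH]
  set M := opNorm (C - Φ) with hMdef
  have h1 : ∀ i, hH.eigenvalues i ^ 2 ≤
      M * hH.eigenvalues i + (if hH.eigenvalues i < 0 then 2 * M ^ 2 else 0) := by
    intro i
    have := abs_le.1 (key_eig hH i)
    split_ifs with h
    · nlinarith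
    · nlinarith
  calc ∑ i, hH.eigenvalues i ^ 2 ≤ ∑ i, (M * hH.eigenvalues i +
        (if hH.eigenvalues i < 0 then 2 * M ^ 2 else 0)) := Finset.sum_le_sum fun i _ => h1 i
    _ = (Finset.univ.filter (fun i => hH.eigenvalues i < 0)).card * (2 * M ^ 2) := by
        rw [Finset.sum_add_distrib, ← Finset.mul_sum, htr, ← Finset.sum_filter]; simp
    _ ≤ r * (2 * M ^ 2) := by
        have : ((Finset.univ.filter (fun i => hH.eigenvalues i < 0)).card : ℝ) ≤ r := by
          exact_mod_cast hcard
        gcongr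
    _ = _ := by ring

open MeasureTheory in
/-- Frobenius-error concentration, Theorem 1 eq. (3): if the least-squares
estimator `L` of a rank-`r` density matrix `Φ` satisfies the operator-norm tail bound
`ℙ(‖L − Φ‖_∞ ≥ τ) ≤ K e^{−cτ²}` for all `τ ∈ [0,1]`, the intermediate estimator `C` is a
density matrix with `‖C − Φ‖_∞ ≤ 2‖L − Φ‖_∞` pointwise, and `S` satisfies
`‖S − Φ‖₂ ≤ ‖C − Φ‖₂` pointwise, then `ℙ(‖S − Φ‖₂ ≥ ε) ≤ K e^{−cε²/(8r)}` for `ε ∈ (0,1]`. -/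
theorem pls_frobenius_concentration {Ω : Type*} [MeasurableSpace Ω] (ℙ : Measure Ω)
    [IsProbabilityMeasure ℙ] (n r : ℕ) (hn : 1 ≤ n) (hr : 1 ≤ r) (K c : ℝ)
    (hK : 0 < K) (hc : 0 < c)
    (Φ : Matrix (Fin n) (Fin n) ℂ) (hΦ : IsDensity Φ) (hΦr : Φ.rank ≤ r)
    (L C S : Ω → Matrix (Fin n) (Fin n) ℂ)
    (hL : Measurable L) (hC : Measurable C) (hS : Measurable S)
    (ha : ∀ τ : ℝ, τ ∈ Set.Icc (0 : ℝ) 1 →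
      ℙ {ω | τ ≤ opNorm (L ω - Φ)} ≤ ENNReal.ofReal (K * Real.exp (-c * τ ^ 2)))
    (hb : ∀ ω, IsDensity (C ω) ∧ opNorm (C ω - Φ) ≤ 2 * opNorm (L ω - Φ) ∧
      frobNorm (S ω - Φ) ≤ frobNorm (C ω - Φ)) :
    ∀ ε : ℝ, ε ∈ Set.Ioc (0 : ℝ) 1 →
      ℙ {ω | ε ≤ frobNorm (S ω - Φ)} ≤
        ENNReal.ofReal (K * Real.exp (-c * ε ^ 2 / (8 * r))) := by
  rintro ε ⟨h0, h1⟩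
  have hr' : (1 : ℝ) ≤ r := by exact_mod_cast hr
  have hs : (0 : ℝ) < 8 * r := by linarith
  have hsq : (ε / Real.sqrt (8 * r)) ^ 2 = ε ^ 2 / (8 * r) := by
    rw [div_pow, Real.sq_sqrt hs.le]
  have hτ : ε / Real.sqrt (8 * r) ∈ Set.Icc (0 : ℝ) 1 := by
    refine ⟨by positivity, ?_⟩
    rw [div_le_one (by positivity)]
    exact h1.trans (Real.one_le_sqrt.2 (by linarith))
  have key := ha _ hτ
  rw [hsq, ← mul_div_assoc] at key
  refine (measure_mono ?_).trans key
  intro ω hω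
  obtain ⟨hCd, hCL, hSC⟩ := hb ω
  have hε : ε ≤ frobNorm (C ω - Φ) := le_trans hω hSC
  have hB := key_bound hΦ hΦr hCd
  have hM : 0 ≤ opNorm (C ω - Φ) := norm_nonneg _
  have hML : 0 ≤ opNorm (L ω - Φ) := norm_nonneg _
  have e1 : ε ^ 2 ≤ frobNorm (C ω - Φ) ^ 2 := by gcongr
  have e2 : opNorm (C ω - Φ) ^ 2 ≤ (2 * opNorm (L ω - Φ)) ^ 2 := by gcongr
  have e3 : 2 * (r : ℝ) * opNorm (C ω - Φ) ^ 2 ≤ 2 * r * (2 * opNorm (L ω - Φ)) ^ 2 := by gcongr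
  change ε / Real.sqrt (8 * r) ≤ opNorm (L ω - Φ)
  refine (sq_le_sq₀ hτ.1 hML).1 ?_
  rw [hsq, div_le_iff₀ hs]
  linarith
end
end

section
/- Let (Ω, ℙ) be a probability space, n ≥ 1, r ≥ 1, K > 0, c > 0. Let Φ ∈ M(ℂ^n) be a density matrix of rank at most r, and let L, C, S : Ω → M(ℂ^n) be measurable matrix-valued maps such that: (a) for every τ ∈ [0,1], ℙ( ‖L − Φ‖_∞ ≥ τ ) ≤ K e^{−c τ²}; (b) for every ω, C(ω) and S(ω) are density matrices, ‖C(ω) − Φ‖_∞ ≤ 2 ‖L(ω) − Φ‖_∞, and ‖S(ω) − Φ‖₂ ≤ ‖C(ω) − Φ‖₂. Then for every ε ∈ (0,1], ℙ( ‖S − Φ‖₁ ≥ ε ) ≤ K e^{−c ε² / (32 r²)}. -/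
noncomputable section
open Matrix Kronecker BigOperators
open scoped ComplexOrder

section helpers
variable {m : Type*} [Fintype m] [DecidableEq m]

open scoped MatrixOrder in
lemma aux_traceNorm {X : Matrix m m ℂ} (hX : X.IsHermitian) :
    traceNorm X = ∑ i, |hX.eigenvalues i| := by
  have h1 : CFC.sqrt (Xᴴ * X) = CFC.abs X := rfl
  unfold traceNorm
  rw [h1, CFC.abs_eq_cfc_norm X hX, hX.cfc_eq, IsHermitian.cfc, Unitary.conjStarAlgAut_apply,
    Matrix.trace_mul_comm, ← mul_assoc]
  simp [Matrix.trace_diagonal]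

lemma aux_frobNorm {X : Matrix m m ℂ} (hX : X.IsHermitian) :
    frobNorm X = Real.sqrt (∑ i, hX.eigenvalues i ^ 2) := by
  unfold frobNorm
  congr 1
  rw [hX.eq]
  conv_lhs => rw [hX.spectral_theorem, ← map_mul, Unitary.conjStarAlgAut_apply,
    Matrix.trace_mul_comm, ← mul_assoc]
  simp [Matrix.trace_diagonal, pow_two]

lemma aux_opNorm {X : Matrix m m ℂ} (hX : X.IsHermitian) (i : m) :
    |hX.eigenvalues i| ≤ opNorm X := by
  have h := (Matrix.toEuclideanCLM (𝕜 := ℂ) X).le_opNorm (hX.eigenvectorBasis i)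
  have h2 : Matrix.toEuclideanCLM (𝕜 := ℂ) X (hX.eigenvectorBasis i)
      = (hX.eigenvalues i) • (hX.eigenvectorBasis i) := by
    apply (WithLp.ofLp_injective 2)
    rw [Matrix.ofLp_toEuclideanCLM, hX.mulVec_eigenvectorBasis]
    rfl
  rw [h2, norm_smul] at h
  simpa [opNorm] using h

lemma aux_card {S Φ : Matrix m m ℂ} (hS : S.PosSemidef) (hX : (S - Φ).IsHermitian) :
    (Finset.univ.filter fun i => hX.eigenvalues i < 0).card ≤ Φ.rank := by
  classical
  set P : m → Prop := fun i => hX.eigenvalues i < 0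
  set U : Matrix m m ℂ := (hX.eigenvectorUnitary : Matrix m m ℂ) with hU
  let V : Matrix m {i // P i} ℂ := U.submatrix id Subtype.val
  have hVX : Vᴴ * (S - Φ) * V = diagonal fun i : {i // P i} => ((hX.eigenvalues i : ℝ) : ℂ) := by
    have h := hX.conjStarAlgAut_star_eigenvectorUnitary
    rw [Unitary.conjStarAlgAut_apply] at h
    ext i j
    have hij := congrFun (congrFun h i.1) j.1
    have : (Vᴴ * (S - Φ) * V) i j = (Uᴴ * (S - Φ) * U) i.1 j.1 := by
      simp [Matrix.mul_apply, V]
    rw [this]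
    simp only [star_star, Unitary.coe_star] at hij
    change (Uᴴ * (S - Φ) * U) i.1 j.1 = _ at hij
    rw [hij]
    simp [diagonal_apply, Subtype.ext_iff]
  have hinj : Function.Injective (Φ * V).mulVecLin := by
    rw [← LinearMap.ker_eq_bot, LinearMap.ker_eq_bot']
    intro a ha
    have ha' : Φ *ᵥ (V *ᵥ a) = 0 := by simpa [Matrix.mulVec_mulVec] using ha
    have h1 : 0 ≤ star (V *ᵥ a) ⬝ᵥ S *ᵥ (V *ᵥ a) := hS.dotProduct_mulVec_nonneg _
    have h2 : star (V *ᵥ a) ⬝ᵥ S *ᵥ (V *ᵥ a) = star a ⬝ᵥ ((Vᴴ * (S - Φ) * V) *ᵥ a) := by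
      rw [← Matrix.mulVec_mulVec, ← Matrix.mulVec_mulVec, Matrix.sub_mulVec, ha', sub_zero,
        Matrix.star_mulVec, ← Matrix.dotProduct_mulVec]
    rw [h2, hVX] at h1
    have h3 : (star a ⬝ᵥ ((diagonal fun i : {i // P i} => ((hX.eigenvalues i : ℝ) : ℂ)) *ᵥ a))
        = ((∑ i : {i // P i}, hX.eigenvalues i * Complex.normSq (a i) : ℝ) : ℂ) := by
      simp only [dotProduct, Matrix.mulVec_diagonal, Complex.ofReal_sum, Complex.ofReal_mul,
        Complex.normSq_eq_conj_mul_self, Pi.star_apply, RCLike.star_def]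
      refine Finset.sum_congr rfl fun i _ => by ring
    rw [h3] at h1
    have h4 : 0 ≤ ∑ i : {i // P i}, hX.eigenvalues i * Complex.normSq (a i) := by
      exact_mod_cast h1
    have hnon : ∀ i ∈ (Finset.univ : Finset {i // P i}),
        hX.eigenvalues i * Complex.normSq (a i) ≤ 0 := fun i _ =>
      mul_nonpos_of_nonpos_of_nonneg (le_of_lt i.2) (Complex.normSq_nonneg _)
    have h5 := (Finset.sum_eq_zero_iff_of_nonpos hnon).1
      (le_antisymm (Finset.sum_nonpos hnon) h4)
    ext i
    have h6 := h5 i (Finset.mem_univ i)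
    rcases mul_eq_zero.1 h6 with h7 | h7
    · exact absurd h7 (ne_of_lt i.2)
    · simpa using h7
  have hr : (Φ * V).rank = Fintype.card {i // P i} := by
    rw [Matrix.rank, LinearMap.finrank_range_of_inj hinj, Module.finrank_fintype_fun_eq_card]
  calc _ = Fintype.card {i // P i} := by rw [Fintype.card_subtype]
    _ = (Φ * V).rank := hr.symm
    _ ≤ Φ.rank := Matrix.rank_mul_le_left _ _

lemma aux_sum {X : Matrix m m ℂ} (hX : X.IsHermitian) (h0 : X.trace = 0) :
    ∑ i, |hX.eigenvalues i| =
      2 * ∑ i ∈ Finset.univ.filter (fun i => hX.eigenvalues i < 0), |hX.eigenvalues i| := by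
  have h := hX.trace_eq_sum_eigenvalues
  rw [h0] at h
  have h' : ∑ i, hX.eigenvalues i = 0 := by
    have : ((∑ i, hX.eigenvalues i : ℝ) : ℂ) = 0 := by rw [h]; push_cast; rfl
    exact_mod_cast this
  have e : ∀ i, |hX.eigenvalues i| = hX.eigenvalues i +
      2 * (if hX.eigenvalues i < 0 then |hX.eigenvalues i| else 0) := by
    intro i
    split_ifs with hi
    · rw [abs_of_neg hi]; ring
    · rw [abs_of_nonneg (not_lt.1 hi)]; ring
  rw [Finset.sum_filter, Finset.mul_sum]
  conv_lhs => rw [Finset.sum_congr rfl fun i _ => e i, Finset.sum_add_distrib, h', zero_add]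

lemma aux_trace_le {S Φ : Matrix m m ℂ} (hS : IsDensity S) (hΦ : IsDensity Φ) {r : ℕ}
    (hr : Φ.rank ≤ r) : traceNorm (S - Φ) ^ 2 ≤ 4 * r * frobNorm (S - Φ) ^ 2 := by
  have hX : (S - Φ).IsHermitian := hS.1.1.sub hΦ.1.1
  have h0 : (S - Φ).trace = 0 := by rw [Matrix.trace_sub, hS.2, hΦ.2, sub_self]
  rw [aux_traceNorm hX, aux_frobNorm hX, aux_sum hX h0,
    Real.sq_sqrt (Finset.sum_nonneg fun i _ => sq_nonneg _)]
  have hc : ((Finset.univ.filter fun i => hX.eigenvalues i < 0).card : ℝ) ≤ r := by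
    exact_mod_cast (aux_card hS.1 hX).trans hr
  have h1 := sq_sum_le_card_mul_sum_sq (s := Finset.univ.filter fun i => hX.eigenvalues i < 0)
    (f := fun i => |hX.eigenvalues i|)
  simp only [sq_abs] at h1
  have h2 : ∑ i ∈ Finset.univ.filter (fun i => hX.eigenvalues i < 0), hX.eigenvalues i ^ 2
      ≤ ∑ i, hX.eigenvalues i ^ 2 :=
    Finset.sum_le_sum_of_subset_of_nonneg (Finset.filter_subset _ _) fun i _ _ => sq_nonneg _
  have h3 := mul_le_mul hc h2 (Finset.sum_nonneg fun i _ => sq_nonneg _) (Nat.cast_nonneg r)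
  rw [mul_pow]
  linarith

lemma aux_frob_le {C Φ : Matrix m m ℂ} (hC : IsDensity C) (hΦ : IsDensity Φ) {r : ℕ}
    (hr : Φ.rank ≤ r) : frobNorm (C - Φ) ^ 2 ≤ 2 * r * opNorm (C - Φ) ^ 2 := by
  have hX : (C - Φ).IsHermitian := hC.1.1.sub hΦ.1.1
  have h0 : (C - Φ).trace = 0 := by rw [Matrix.trace_sub, hC.2, hΦ.2, sub_self]
  have hop : 0 ≤ opNorm (C - Φ) := norm_nonneg _
  rw [aux_frobNorm hX, Real.sq_sqrt (Finset.sum_nonneg fun i _ => sq_nonneg _)]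
  have hc : ((Finset.univ.filter fun i => hX.eigenvalues i < 0).card : ℝ) ≤ r := by
    exact_mod_cast (aux_card hC.1 hX).trans hr
  have h1 : ∑ i, hX.eigenvalues i ^ 2 ≤ opNorm (C - Φ) * ∑ i, |hX.eigenvalues i| := by
    rw [Finset.mul_sum]
    refine Finset.sum_le_sum fun i _ => ?_
    rw [← sq_abs, pow_two]
    exact mul_le_mul_of_nonneg_right (aux_opNorm hX i) (abs_nonneg _)
  have h2 : ∑ i ∈ Finset.univ.filter (fun i => hX.eigenvalues i < 0), |hX.eigenvalues i|
      ≤ r * opNorm (C - Φ) := by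
    refine (Finset.sum_le_card_nsmul _ _ _ fun i _ => aux_opNorm hX i).trans ?_
    rw [nsmul_eq_mul]
    exact mul_le_mul_of_nonneg_right hc hop
  rw [aux_sum hX h0] at h1
  nlinarith [mul_le_mul_of_nonneg_left h2 hop]

end helpers

open MeasureTheory in
/-- trace-norm concentration, Theorem 1 eq. (4): if the least-squares
estimator `L` of a rank-`r` density matrix `Φ` satisfies the operator-norm tail bound
`ℙ(‖L − Φ‖_∞ ≥ τ) ≤ K e^{−cτ²}` for all `τ ∈ [0,1]`, the estimators `C` and `S` are density
matrices with `‖C − Φ‖_∞ ≤ 2‖L − Φ‖_∞` and `‖S − Φ‖₂ ≤ ‖C − Φ‖₂` pointwise, then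
`ℙ(‖S − Φ‖₁ ≥ ε) ≤ K e^{−cε²/(32r²)}` for `ε ∈ (0,1]`. -/
theorem pls_traceNorm_concentration {Ω : Type*} [MeasurableSpace Ω] (ℙ : Measure Ω)
    [IsProbabilityMeasure ℙ] (n r : ℕ) (hn : 1 ≤ n) (hr : 1 ≤ r) (K c : ℝ)
    (hK : 0 < K) (hc : 0 < c)
    (Φ : Matrix (Fin n) (Fin n) ℂ) (hΦ : IsDensity Φ) (hΦr : Φ.rank ≤ r)
    (L C S : Ω → Matrix (Fin n) (Fin n) ℂ)
    (hL : Measurable L) (hC : Measurable C) (hS : Measurable S)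
    (ha : ∀ τ : ℝ, τ ∈ Set.Icc (0 : ℝ) 1 →
      ℙ {ω | τ ≤ opNorm (L ω - Φ)} ≤ ENNReal.ofReal (K * Real.exp (-c * τ ^ 2)))
    (hb : ∀ ω, IsDensity (C ω) ∧ IsDensity (S ω) ∧
      opNorm (C ω - Φ) ≤ 2 * opNorm (L ω - Φ) ∧
      frobNorm (S ω - Φ) ≤ frobNorm (C ω - Φ)) :
    ∀ ε : ℝ, ε ∈ Set.Ioc (0 : ℝ) 1 →
      ℙ {ω | ε ≤ traceNorm (S ω - Φ)} ≤
        ENNReal.ofReal (K * Real.exp (-c * ε ^ 2 / (32 * r ^ 2))) := by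
  intro ε hε
  have hr' : (1 : ℝ) ≤ r := by exact_mod_cast hr
  set D : ℝ := Real.sqrt 32 * r with hD
  have h32 : (1 : ℝ) ≤ Real.sqrt 32 := Real.one_le_sqrt.2 (by norm_num)
  have hD1 : 1 ≤ D := one_le_mul_of_one_le_of_one_le h32 hr'
  have hD0 : 0 < D := by linarith
  have hD2 : D ^ 2 = 32 * r ^ 2 := by rw [hD, mul_pow, Real.sq_sqrt (by norm_num)]
  have hτ : ε / D ∈ Set.Icc (0 : ℝ) 1 :=
    ⟨div_nonneg hε.1.le hD0.le, (div_le_one hD0).2 (hε.2.trans hD1)⟩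
  have key := ha (ε / D) hτ
  have e : -c * (ε / D) ^ 2 = -c * ε ^ 2 / (32 * r ^ 2) := by
    rw [div_pow, hD2]; ring
  rw [e] at key
  refine le_trans (measure_mono fun ω hω => ?_) key
  obtain ⟨hCd, hSd, h1, h2⟩ := hb ω
  have hω' : ε ≤ traceNorm (S ω - Φ) := hω
  change ε / D ≤ opNorm (L ω - Φ)
  have hopL : 0 ≤ opNorm (L ω - Φ) := norm_nonneg _
  have hopC : 0 ≤ opNorm (C ω - Φ) := norm_nonneg _
  have hfS : 0 ≤ frobNorm (S ω - Φ) := Real.sqrt_nonneg _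
  have t1 := aux_trace_le hSd hΦ hΦr
  have t2 := aux_frob_le hCd hΦ hΦr
  have t3 := pow_le_pow_left₀ hfS h2 2
  have t4 := pow_le_pow_left₀ hopC h1 2
  have t5 := pow_le_pow_left₀ hε.1.le hω' 2
  have t6 : ε ^ 2 ≤ (D * opNorm (L ω - Φ)) ^ 2 := by
    calc ε ^ 2 ≤ 4 * r * frobNorm (S ω - Φ) ^ 2 := t5.trans t1
      _ ≤ 4 * r * (2 * r * (2 * opNorm (L ω - Φ)) ^ 2) := by
        refine mul_le_mul_of_nonneg_left ?_ (by linarith)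
        refine (t3.trans t2).trans ?_
        exact mul_le_mul_of_nonneg_left t4 (by linarith)
      _ = (D * opNorm (L ω - Φ)) ^ 2 := by rw [mul_pow D, hD2]; ring
  have t7 := (le_abs_self ε).trans (abs_le_of_sq_le_sq t6 (mul_nonneg hD0.le hopL))
  rw [div_le_iff₀ hD0]
  linarith
end
end
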